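/- Assume ζ₀ := ū^{in}/u_s > 1, let (u₀, E₀) ∈ T_acc with 0 < u₀ < u_s, and let (ū₁, Ē) : [0, l_max] → ℝ² be a smooth solution of the system (ū₁^{γ+1} − u_s^{γ+1})·ū₁' = Ē·ū₁^γ, Ē' = J/ū₁ − ρ̄^{in} with (ū₁, Ē)(0) = (u₀, E₀), ū₁ > 0, and ū₁' > 0 on [0, l_max). Then for all x₁ ∈ [0, l_max]: Ē(x₁) = sgn(ū₁(x₁) − u_s)·√(2H(ū₁(x₁))), where sgn(s) = 1 for s > 0, sgn(s) = −1 for s < 0, and sgn(0) = 0. -/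

import Mathlib

open Set Filter intervalIntegral

/-- The sonic speed `u_s = (γ S₀ J^{γ−1})^{1/(γ+1)}`. -/
noncomputable def usonic (γ S₀ J : ℝ) : ℝ :=
  (γ * S₀ * J ^ (γ - 1)) ^ (1 / (γ + 1))

/-- `ū^{in} = J / ρ̄^{in}`. -/
noncomputable def uIn (ρin J : ℝ) : ℝ := J / ρin

/-- `H(u) = (J/ū^{in}) ∫_{u_s}^{u} t^{−(γ+1)} (t^{γ+1} − u_s^{γ+1})(ū^{in} − t) dt`. -/
noncomputable def Hfun (γ ρin S₀ J : ℝ) (u : ℝ) : ℝ :=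
  (J / uIn ρin J) *
    ∫ t in usonic γ S₀ J..u,
      t ^ (-(γ + 1)) * ((t ^ (γ + 1) - usonic γ S₀ J ^ (γ + 1)) * (uIn ρin J - t))

/-- The critical trajectory `T = {(u,E) ∈ (0,∞) × ℝ : ½E² − H(u) = 0}`. -/
def critTraj (γ ρin S₀ J : ℝ) : Set (ℝ × ℝ) :=
  {p | 0 < p.1 ∧ p.2 ^ 2 / 2 - Hfun γ ρin S₀ J p.1 = 0}

/-- The critical trajectory with acceleration. -/
def critTrajAcc (γ ρin S₀ J : ℝ) : Set (ℝ × ℝ) :=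
  {p ∈ critTraj γ ρin S₀ J | 0 ≤ (p.1 - usonic γ S₀ J) * p.2}

/-- The critical trajectory with deceleration. -/
def critTrajDec (γ ρin S₀ J : ℝ) : Set (ℝ × ℝ) :=
  {p ∈ critTraj γ ρin S₀ J | (p.1 - usonic γ S₀ J) * p.2 ≤ 0}
theorem usonic_pos' (γ S₀ J : ℝ) (hγ : 1 < γ) (hS₀ : 0 < S₀) (hJ : 0 < J) :
    0 < usonic γ S₀ J := by
  unfold usonic
  have : 0 < γ := by linarith
  positivity

theorem Hfun_hasDerivAt (γ ρin S₀ J : ℝ) (hs : 0 < usonic γ S₀ J) (hρin : 0 < ρin) (hJ : 0 < J)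
    (v : ℝ) (hv : 0 < v) :
    HasDerivAt (Hfun γ ρin S₀ J)
      (ρin * (v ^ (-(γ + 1)) * ((v ^ (γ + 1) - usonic γ S₀ J ^ (γ + 1)) * (J / ρin - v)))) v := by
  have hc : ContinuousOn (fun t : ℝ => t ^ (-(γ + 1)) *
      ((t ^ (γ + 1) - usonic γ S₀ J ^ (γ + 1)) * (uIn ρin J - t))) (Ioi 0) := by
    have h1 : ∀ p : ℝ, ContinuousOn (fun t : ℝ => t ^ p) (Ioi 0) := fun p =>
      continuousOn_id.rpow_const (fun x hx => Or.inl (ne_of_gt hx))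
    exact (h1 _).mul (((h1 _).sub continuousOn_const).mul
      (continuousOn_const.sub continuousOn_id))
  have hρ : J / uIn ρin J = ρin := by
    unfold uIn; field_simp
  have hsub : uIcc (usonic γ S₀ J) v ⊆ Ioi 0 := by
    intro t ht
    exact lt_of_lt_of_le (lt_min hs hv) ht.1
  have hd := integral_hasDerivAt_right ((hc.mono hsub).intervalIntegrable)
    (hc.stronglyMeasurableAtFilter isOpen_Ioi v hv) (hc.continuousAt (isOpen_Ioi.mem_nhds hv))
  have := hd.const_mul (J / uIn ρin J)
  rw [hρ] at this
  have e : Hfun γ ρin S₀ J = fun u => ρin * ∫ t in usonic γ S₀ J..u,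
      t ^ (-(γ + 1)) * ((t ^ (γ + 1) - usonic γ S₀ J ^ (γ + 1)) * (uIn ρin J - t)) := by
    funext u; unfold Hfun; rw [hρ]
  rw [e]
  exact this

/-- Along the accelerating smooth transonic solution, the electric field is recovered from
the speed via `Ē = sgn(ū₁ − u_s) √(2H(ū₁))`. -/
theorem stmt8
    (γ ρin S₀ J u₀ E₀ lmax : ℝ)
    (hγ : 1 < γ) (hρin : 0 < ρin) (hS₀ : 0 < S₀) (hJ : 0 < J)
    (hζ₀ : 1 < uIn ρin J / usonic γ S₀ J)
    (hinit : (u₀, E₀) ∈ critTrajAcc γ ρin S₀ J)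
    (hu₀ : 0 < u₀) (hu₀s : u₀ < usonic γ S₀ J)
    (hlmax : 0 < lmax)
    (u E : ℝ → ℝ)
    (husm : ContDiffOn ℝ (⊤ : ℕ∞) u (Icc 0 lmax)) (hEsm : ContDiffOn ℝ (⊤ : ℕ∞) E (Icc 0 lmax))
    (hupos : ∀ x ∈ Icc (0:ℝ) lmax, 0 < u x)
    (hu0 : u 0 = u₀) (hE0 : E 0 = E₀)
    (hODE : ∀ x ∈ Icc (0:ℝ) lmax,
      (u x ^ (γ + 1) - usonic γ S₀ J ^ (γ + 1)) * derivWithin u (Icc 0 lmax) x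
        = E x * u x ^ γ ∧
      derivWithin E (Icc 0 lmax) x = J / u x - ρin)
    (hacc : ∀ x ∈ Ico (0:ℝ) lmax, 0 < derivWithin u (Icc 0 lmax) x)
    :
    ∀ x ∈ Icc (0:ℝ) lmax,
      E x = Real.sign (u x - usonic γ S₀ J) * Real.sqrt (2 * Hfun γ ρin S₀ J (u x)) := by
  have hs := usonic_pos' γ S₀ J hγ hS₀ hJ
  have hud : DifferentiableOn ℝ u (Icc 0 lmax) := husm.differentiableOn (by simp)
  have hEd : DifferentiableOn ℝ E (Icc 0 lmax) := hEsm.differentiableOn (by simp)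
  have hder : ∀ x ∈ Icc (0:ℝ) lmax,
      HasDerivWithinAt (fun y => E y ^ 2 / 2 - Hfun γ ρin S₀ J (u y)) 0 (Icc 0 lmax) x := by
    intro x hx
    have h1 := (hud x hx).hasDerivWithinAt
    have h2 := (hEd x hx).hasDerivWithinAt
    have hup := hupos x hx
    have h3 := (Hfun_hasDerivAt γ ρin S₀ J hs hρin hJ (u x) hup).comp_hasDerivWithinAt x h1
    have h4 := ((h2.pow 2).div_const 2).sub h3
    refine HasDerivWithinAt.congr_deriv h4 ?_
    obtain ⟨o1, o2⟩ := hODE x hx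
    have hp : u x ^ (-(γ + 1)) * u x ^ γ = (u x)⁻¹ := by
      rw [← Real.rpow_add hup, ← Real.rpow_neg_one]; congr 1; ring
    rw [o2]
    have : ρin * (u x ^ (-(γ + 1)) * ((u x ^ (γ + 1) - usonic γ S₀ J ^ (γ + 1)) *
        (J / ρin - u x))) * derivWithin u (Icc 0 lmax) x = E x * (J / u x - ρin) := by
      calc _ = ρin * u x ^ (-(γ + 1)) * ((u x ^ (γ + 1) - usonic γ S₀ J ^ (γ + 1)) *
            derivWithin u (Icc 0 lmax) x) * (J / ρin - u x) := by ring
        _ = ρin * (u x ^ (-(γ + 1)) * u x ^ γ) * E x * (J / ρin - u x) := by rw [o1]; ring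
        _ = _ := by rw [hp]; field_simp
    rw [this]
    simp
    ring
  have hconst := constant_of_derivWithin_zero
    (fun x hx => (hder x hx).differentiableWithinAt)
    (fun x hx => (hder x (Ico_subset_Icc_self hx)).derivWithin
      (uniqueDiffOn_Icc hlmax x (Ico_subset_Icc_self hx)))
  have hmono : MonotoneOn u (Icc 0 lmax) := by
    refine monotoneOn_of_deriv_nonneg (convex_Icc _ _) hud.continuousOn
      (hud.mono interior_subset) ?_
    intro x hx
    rw [interior_Icc] at hx
    rw [← derivWithin_of_mem_nhds (Icc_mem_nhds hx.1 hx.2)]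
    exact (hacc x (Ioo_subset_Ico_self hx)).le
  intro x hx
  have hE2 : E x ^ 2 = 2 * Hfun γ ρin S₀ J (u x) := by
    have h := hconst x hx
    have h0 := hinit.1.2
    simp only [hu0, hE0] at h h0
    linarith
  rw [← hE2, Real.sqrt_sq_eq_abs]
  have hd0 : 0 ≤ derivWithin u (Icc 0 lmax) x := hmono.derivWithin_nonneg
  have hup := hupos x hx
  have hg : 0 < u x ^ γ := Real.rpow_pos_of_pos hup _
  have o1 := (hODE x hx).1
  rcases lt_trichotomy (u x) (usonic γ S₀ J) with h | h | h
  · have := Real.rpow_lt_rpow hup.le h (by linarith : 0 < γ + 1)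
    have hE : E x ≤ 0 := by
      by_contra! hc
      nlinarith [mul_pos hc hg, mul_nonneg (sub_nonneg.2 this.le) hd0]
    rw [Real.sign_of_neg (by linarith), abs_of_nonpos hE]; ring
  · rw [h] at o1 hg
    rw [sub_self, zero_mul] at o1
    have : E x = 0 := by
      rcases mul_eq_zero.1 o1.symm with h' | h'
      · exact h'
      · exact absurd h' hg.ne'
    simp [this]
  · have := Real.rpow_lt_rpow hs.le h (by linarith : 0 < γ + 1)
    have hE : 0 ≤ E x := by
      by_contra! hc
      nlinarith [mul_pos (neg_pos.2 hc) hg, mul_nonneg (sub_nonneg.2 this.le) hd0]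
    rw [Real.sign_of_pos (by linarith), abs_of_nonneg hE]; ring
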